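/- Let Γ be a non-elementary hyperbolic group and μ a symmetric probability measure on Γ whose support generates Γ. If the Green metric d_G belongs to D(Γ), then for every sufficiently small ε>0 the harmonic measure ν is Ahlfors regular of dimension 1/ε on the boundary ∂Γ endowed with a visual metric d_ε^G of parameter ε induced by d_G; that is, ν(B(a,r)) ≍ r^{1/ε} for all a ∈ ∂Γ and 0 < r ≤ diam ∂Γ. -/

import Mathlib

open Filter MeasureTheory Topology Metric Set
open scoped ENNReal

noncomputable section

namespace GHM

/-! ### Coarse geometry of distance functions -/

/-- The Gromov product `(x|y)_w` of `x` and `y` seen from `w`, for a distance function `d`. -/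
def gromov {X : Type*} (d : X → X → ℝ) (w x y : X) : ℝ :=
  (d x w + d y w - d x y) / 2

/-- `d` is `δ`-hyperbolic (four point condition on Gromov products). -/
def IsHyperbolicWith {X : Type*} (d : X → X → ℝ) (δ : ℝ) : Prop :=
  ∀ w x y z : X, min (gromov d w x y) (gromov d w x z) - δ ≤ gromov d w y z

/-- `d` is Gromov hyperbolic. -/
def IsHyperbolic {X : Type*} (d : X → X → ℝ) : Prop :=
  ∃ δ : ℝ, 0 ≤ δ ∧ IsHyperbolicWith d δ

/-- `d` is a genuine metric. -/
structure IsMetricFun {X : Type*} (d : X → X → ℝ) : Prop where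
  refl : ∀ x, d x x = 0
  pos : ∀ x y, x ≠ y → 0 < d x y
  symm : ∀ x y, d x y = d y x
  triangle : ∀ x y z, d x z ≤ d x y + d y z

/-- `f` is a `(Λ,c)`-quasi-isometric embedding from `(X,dX)` to `(Y,dY)`. -/
def QIEmbed {X Y : Type*} (dX : X → X → ℝ) (dY : Y → Y → ℝ)
    (f : X → Y) (Λ c : ℝ) : Prop :=
  ∀ x x' : X, dX x x' / Λ - c ≤ dY (f x) (f x') ∧ dY (f x) (f x') ≤ Λ * dX x x' + c

/-- `(X,dX)` and `(Y,dY)` are quasi-isometric. -/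
def QuasiIsometric {X Y : Type*} (dX : X → X → ℝ) (dY : Y → Y → ℝ) : Prop :=
  ∃ (f : X → Y) (Λ c C : ℝ), 1 ≤ Λ ∧ 0 ≤ c ∧ 0 ≤ C ∧
    QIEmbed dX dY f Λ c ∧ ∀ y : Y, ∃ x : X, dY (f x) y ≤ C

variable {G : Type*} [Group G]

/-- Word length of `g` with respect to the (symmetrized) finite set `S`. -/
def wordLength (S : Finset G) (g : G) : ℕ :=
  sInf {n : ℕ | ∃ l : List G, l.length = n ∧ (∀ a ∈ l, a ∈ S ∨ a⁻¹ ∈ S) ∧ l.prod = g}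

/-- The word metric associated with a finite generating set `S`. -/
def wordDist (S : Finset G) (x y : G) : ℝ := wordLength S (x⁻¹ * y)

/-- `S` generates the group. -/
def Generates (S : Finset G) : Prop := Subgroup.closure (S : Set G) = ⊤

/-- The standard metric on `ℤ`. -/
def intDist (m n : ℤ) : ℝ := |(m : ℝ) - (n : ℝ)|

/-- `G` is a non-elementary hyperbolic group: finitely generated, its word metrics are
Gromov hyperbolic, it is infinite, and it is not quasi-isometric to `ℤ`. -/
def NonElemHyperbolic (G : Type*) [Group G] : Prop :=
  Infinite G ∧ (∃ S : Finset G, Generates S) ∧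
    ∀ S : Finset G, Generates S →
      IsHyperbolic (wordDist S) ∧ ¬ QuasiIsometric (wordDist S) intDist

/-- `d` is invariant under left translations. -/
def LeftInvariant (d : G → G → ℝ) : Prop := ∀ g x y : G, d (g * x) (g * y) = d x y

/-- `d` belongs to the class `𝒟(Γ)`: it is a left-invariant Gromov hyperbolic metric on the
group, quasi-isometric to a word metric of a finite generating set. -/
def MemD (d : G → G → ℝ) : Prop :=
  IsMetricFun d ∧ LeftInvariant d ∧ IsHyperbolic d ∧
    ∃ S : Finset G, Generates S ∧ QuasiIsometric d (wordDist S)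

/-! ### Random walks -/

/-- `μ` is (the density of) a probability measure on the (countable) group. -/
def IsProbDensity (μ : G → ℝ) : Prop := (∀ g, 0 ≤ μ g) ∧ HasSum μ 1

/-- `μ` is symmetric. -/
def IsSymmetric (μ : G → ℝ) : Prop := ∀ g : G, μ g⁻¹ = μ g

/-- The support of `μ` generates `G`. -/
def GeneratesSupp (μ : G → ℝ) : Prop := Subgroup.closure {g : G | μ g ≠ 0} = ⊤

open scoped Classical in
/-- Convolution powers `μ^n` of `μ`. -/
def convPow (μ : G → ℝ) : ℕ → G → ℝ
  | 0 => fun g => if g = 1 then 1 else 0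
  | n + 1 => fun g => ∑' y : G, convPow μ n y * μ (y⁻¹ * g)

/-- The Green function `G(x,y) = ∑_n μ^n(x⁻¹y)`. -/
def greenFn (μ : G → ℝ) (x y : G) : ℝ := ∑' n : ℕ, convPow μ n (x⁻¹ * y)

/-- The random walk is transient, i.e. `G(e,e) = ∑_n μ^n(e) < ∞`. -/
def Transient (μ : G → ℝ) : Prop := Summable fun n : ℕ => convPow μ n (1 : G)

/-- Successive positions of a walk started at `x` with increments `l`. -/
def walkPositions (x : G) (l : List G) : List G := l.scanl (fun p a => p * a) x

/-- The increments `l` describe a trajectory from `x` which hits `y` for the first time at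
its final position. -/
def IsFirstHitPath (x y : G) (l : List G) : Prop :=
  (walkPositions x l).getLast? = some y ∧ y ∉ (walkPositions x l).dropLast

/-- `F(x,y)`: the probability that the `μ`-random walk started at `x` ever hits `y`. -/
def hitProb (μ : G → ℝ) (x y : G) : ℝ :=
  ∑' l : {l : List G // IsFirstHitPath x y l}, ((l : List G).map μ).prod

/-- The Green metric `d_G(x,y) = - log F(x,y)`. -/
def greenDist (μ : G → ℝ) (x y : G) : ℝ := - Real.log (hitProb μ x y)

/-- `μ` has a finite first moment with respect to `d`. -/
def FiniteFirstMoment (d : G → G → ℝ) (μ : G → ℝ) : Prop :=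
  Summable fun g : G => d 1 g * μ g

/-- `μ` has an exponential moment with respect to `d`. -/
def HasExpMoment (d : G → G → ℝ) (μ : G → ℝ) : Prop :=
  ∃ lam : ℝ, 0 < lam ∧ Summable fun g : G => Real.exp (lam * d 1 g) * μ g

/-- The entropy `H(μ^n) = -∑_γ μ^n(γ) log μ^n(γ)` of the `n`-th convolution power. -/
def entropyAt (μ : G → ℝ) (n : ℕ) : ℝ :=
  - ∑' g : G, convPow μ n g * Real.log (convPow μ n g)

/-- `h` is the asymptotic entropy of the walk. -/
def HasEntropy (μ : G → ℝ) (h : ℝ) : Prop :=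
  Tendsto (fun n : ℕ => entropyAt μ n / n) atTop (𝓝 h)

/-- `v` is the logarithmic volume growth of `(G,d)` (seen from the identity). -/
def HasGrowth (d : G → G → ℝ) (v : ℝ) : Prop :=
  Filter.limsup (fun R : ℝ => Real.log (Nat.card {g : G // d 1 g ≤ R}) / R) atTop = v

/-- The position `Z_n = ω_0 ω_1 ⋯ ω_{n-1}` of the random walk at time `n`, given the
sequence of increments `ω`. -/
def walkPos (n : ℕ) (ω : ℕ → G) : G := ((List.range n).map ω).prod

/-- `P` is the law on the space of increment sequences of an i.i.d. sequence of law `μ`: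
cylinders have product measure.  (This characterizes the path measure of the random walk.) -/
def IsWalkMeasure [MeasurableSpace G] (μ : G → ℝ) (P : Measure (ℕ → G)) : Prop :=
  IsProbabilityMeasure P ∧
    ∀ (n : ℕ) (g : Fin n → G),
      P {ω : ℕ → G | ∀ i : Fin n, ω (i : ℕ) = g i} = ∏ i : Fin n, ENNReal.ofReal (μ (g i))

/-! ### The Gromov boundary, visual metrics, harmonic and quasiconformal measures -/

/-- A sequence tends to infinity if Gromov products (at the base point `1`) go to `∞`. -/
def TendstoInfinity (d : G → G → ℝ) (u : ℕ → G) : Prop :=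
  Tendsto (fun p : ℕ × ℕ => gromov d 1 (u p.1) (u p.2)) atTop atTop

/-- A realization of the Gromov boundary of `(G,d)` as an abstract type `B`:
`conv u b` means that the sequence `u` converges at infinity to the boundary point `b`.
The group acts on its boundary by `smul`. -/
structure BoundaryData (G : Type*) [Group G] (d : G → G → ℝ) (B : Type*) where
  conv : (ℕ → G) → B → Prop
  smul : G → B → B
  conv_unique : ∀ u b b', conv u b → conv u b' → b = b'
  exists_conv : ∀ u, TendstoInfinity d u → ∃ b, conv u b
  conv_tendstoInfinity : ∀ u b, conv u b → TendstoInfinity d u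
  conv_iff : ∀ u v b, conv u b →
    (conv v b ↔ Tendsto (fun n => gromov d 1 (u n) (v n)) atTop atTop)
  conv_surj : ∀ b, ∃ u, conv u b
  smul_conv : ∀ (γ : G) (u) (b), conv u b → conv (fun n => γ * u n) (smul γ b)

/-- Asymptotic Gromov product of two sequences. -/
def seqGromov (d : G → G → ℝ) (u v : ℕ → G) : ℝ :=
  Filter.liminf (fun n => gromov d 1 (u n) (v n)) atTop

/-- The metric of `B` is a visual metric of parameter `ε` (with comparison constant `C`)
for the hyperbolic distance `d` on the group:  `dist(a,b) ≍ exp(-ε (a|b))`. -/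
def IsVisualMetric {B : Type*} [MetricSpace B] (d : G → G → ℝ)
    (bd : BoundaryData G d B) (ε C : ℝ) : Prop :=
  0 < ε ∧ 0 < C ∧
    ∀ u v b b', bd.conv u b → bd.conv v b' → b ≠ b' →
      dist b b' ≤ C * Real.exp (-ε * seqGromov d u v) ∧
      Real.exp (-ε * seqGromov d u v) ≤ C * dist b b'

/-- `ν` is the harmonic measure of the random walk of law `μ` on the boundary `B`:
it is the law of the almost sure limit `Z_∞` of the walk on the boundary. -/
def IsHarmonicMeasure {B : Type*} [MeasurableSpace G] [MeasurableSpace B]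
    (d : G → G → ℝ) (bd : BoundaryData G d B) (μ : G → ℝ)
    (P : Measure (ℕ → G)) (ν : Measure B) : Prop :=
  IsWalkMeasure μ P ∧
    ∃ Zinf : (ℕ → G) → B, Measurable Zinf ∧
      (∀ᵐ ω ∂P, bd.conv (fun n => walkPos n ω) (Zinf ω)) ∧ ν = P.map Zinf

/-- Busemann function `β_b(x,y)` of the boundary point `b`. -/
def busemann {B : Type*} (d : G → G → ℝ) (bd : BoundaryData G d B)
    (x y : G) (b : B) : ℝ :=
  sSup {t : ℝ | ∃ u, bd.conv u b ∧
    t = Filter.limsup (fun n => d x (u n) - d y (u n)) atTop}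

/-- The image measure `γ^*ρ`, `γ^*ρ(A) = ρ(γA)`. -/
def actPush {B : Type*} [MeasurableSpace B] {d : G → G → ℝ}
    (bd : BoundaryData G d B) (γ : G) (ρ : Measure B) : Measure B :=
  ρ.map (bd.smul γ⁻¹)

/-- `ρ` is a quasiconformal measure on the boundary for `(G,d)` of logarithmic growth
parameter `v`: `γ^*ρ` and `ρ` are mutually absolutely continuous, with density
`dγ^*ρ/dρ ≍ exp (v β_b(1,γ⁻¹))` (uniformly in `γ`). -/
def IsQuasiconformalMeasure {B : Type*} [MeasurableSpace B] {d : G → G → ℝ}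
    (bd : BoundaryData G d B) (ρ : Measure B) (v : ℝ) : Prop :=
  ∃ C : ℝ, 0 < C ∧ ∀ γ : G,
    actPush bd γ ρ ≪ ρ ∧ ρ ≪ actPush bd γ ρ ∧
      ∀ᵐ b ∂ρ,
        (actPush bd γ ρ).rnDeriv ρ b
            ≤ ENNReal.ofReal (C * Real.exp (v * busemann d bd 1 γ⁻¹ b)) ∧
        ENNReal.ofReal (C⁻¹ * Real.exp (v * busemann d bd 1 γ⁻¹ b))
            ≤ (actPush bd γ ρ).rnDeriv ρ b

/-- `ν` is Ahlfors regular of dimension `α`: `ν(B(b,r)) ≍ r^α`. -/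
def AhlforsRegularOfDim {B : Type*} [MetricSpace B] [MeasurableSpace B]
    (ν : Measure B) (α : ℝ) : Prop :=
  ∃ C : ℝ, 0 < C ∧ ∀ (b : B) (r : ℝ), 0 < r → r ≤ Metric.diam (Set.univ : Set B) →
    ENNReal.ofReal (C⁻¹ * r ^ α) ≤ ν (Metric.ball b r) ∧
      ν (Metric.ball b r) ≤ ENNReal.ofReal (C * r ^ α)

/-- The Hausdorff dimension of a measure: the infimum of the Hausdorff dimensions of sets of
full measure. -/
def measureDim {B : Type*} [EMetricSpace B] [MeasurableSpace B] (ν : Measure B) : ℝ≥0∞ :=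
  ⨅ (A : Set B) (_ : ν Aᶜ = 0), dimH A

/-! ### Word geodesics -/

/-- `p 0, …, p n` is a geodesic segment for the word metric of `S`. -/
def IsWordGeodesic (S : Finset G) (n : ℕ) (p : ℕ → G) : Prop :=
  ∀ i j : ℕ, i ≤ n → j ≤ n → wordDist S (p i) (p j) = |(i : ℝ) - (j : ℝ)|

/-- `v` lies within distance `r` of some word geodesic segment from `x` to `y`. -/
def NearWordGeodesic (S : Finset G) (x y v : G) (r : ℝ) : Prop :=
  ∃ (n : ℕ) (p : ℕ → G), IsWordGeodesic S n p ∧ p 0 = x ∧ p n = y ∧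
    ∃ i ≤ n, wordDist S v (p i) ≤ r

/-! ### Martin boundary -/

/-- The Martin kernel `K(x,y) = G(x,y)/G(e,y)`. -/
def martinKernel (μ : G → ℝ) (x y : G) : ℝ := greenFn μ x y / greenFn μ 1 y

/-- The embedding `y ↦ K(·,y)` of the group in `C(G)` (pointwise topology). -/
def martinMap (μ : G → ℝ) (y : G) : G → ℝ := fun x => martinKernel μ x y

/-- The Martin boundary: the boundary of the image of the group under the Martin embedding
in the space of functions with the topology of pointwise convergence. -/
def martinBoundary (μ : G → ℝ) : Set (G → ℝ) :=
  closure (Set.range (martinMap μ)) \ Set.range (martinMap μ)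

/-- `h` is a `μ`-harmonic function. -/
def IsHarmonicFn (μ : G → ℝ) (h : G → ℝ) : Prop :=
  ∀ x : G, h x = ∑' y : G, h y * μ (x⁻¹ * y)

/-- `h` is a minimal positive harmonic function. -/
def IsMinimalHarmonic (μ : G → ℝ) (h : G → ℝ) : Prop :=
  IsHarmonicFn μ h ∧ (∀ x, 0 < h x) ∧
    ∀ u : G → ℝ, IsHarmonicFn μ u → (∀ x, 0 ≤ u x) → (∀ x, u x ≤ h x) →
      ∃ c : ℝ, u = fun x => c * h x

/-! ### Metric space versions (geodesic and quasiruled spaces) -/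

/-- A geodesic metric space. -/
def IsGeodesicSpace (X : Type*) [MetricSpace X] : Prop :=
  ∀ x y : X, ∃ f : ℝ → X, f 0 = x ∧ f (dist x y) = y ∧
    ∀ s ∈ Set.Icc (0:ℝ) (dist x y), ∀ t ∈ Set.Icc (0:ℝ) (dist x y),
      dist (f s) (f t) = |s - t|

/-- `f : [a,b] → Y` is a `(Λ,c)`-quasigeodesic segment. -/
def IsQuasigeodesicOn {Y : Type*} [MetricSpace Y] (f : ℝ → Y) (a b Λ c : ℝ) : Prop :=
  ∀ s ∈ Set.Icc a b, ∀ t ∈ Set.Icc a b,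
    |s - t| / Λ - c ≤ dist (f s) (f t) ∧ dist (f s) (f t) ≤ Λ * |s - t| + c

/-- `f : [a,b] → Y` is a `τ`-quasiruler: Gromov products of triples along it are `≤ τ`. -/
def IsQuasirulerOn {Y : Type*} [MetricSpace Y] (f : ℝ → Y) (a b τ : ℝ) : Prop :=
  ∀ s t u : ℝ, s ∈ Set.Icc a b → t ∈ Set.Icc a b → u ∈ Set.Icc a b → s ≤ t → t ≤ u →
    dist (f s) (f t) + dist (f t) (f u) ≤ dist (f s) (f u) + 2 * τ

/-- A quasiruled metric space: for some constants `(Λ,c,τ)` every pair of points is joined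
by a `(Λ,c)`-quasigeodesic, and every `(Λ,c)`-quasigeodesic is a `τ`-quasiruler. -/
def Quasiruled (Y : Type*) [MetricSpace Y] : Prop :=
  ∃ Λ c τ : ℝ, 1 ≤ Λ ∧ 0 ≤ c ∧ 0 ≤ τ ∧
    (∀ x y : Y, ∃ (a b : ℝ) (f : ℝ → Y), a ≤ b ∧ f a = x ∧ f b = y ∧
      IsQuasigeodesicOn f a b Λ c) ∧
    ∀ (f : ℝ → Y) (a b : ℝ), IsQuasigeodesicOn f a b Λ c → IsQuasirulerOn f a b τ

/-- A metric space is hyperbolic. -/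
def HypSpace (Y : Type*) [MetricSpace Y] : Prop :=
  IsHyperbolic (fun x y : Y => dist x y)

/-- `f` is a quasi-isometry between metric spaces. -/
def MetricQI {X Y : Type*} [MetricSpace X] [MetricSpace Y] (f : X → Y) : Prop :=
  ∃ Λ c C : ℝ, 1 ≤ Λ ∧ 0 ≤ c ∧ 0 ≤ C ∧
    QIEmbed (fun a b : X => dist a b) (fun a b : Y => dist a b) f Λ c ∧
    ∀ y : Y, ∃ x : X, dist (f x) y ≤ C

/-!
In the Green metric `d` the probability of ever reaching `y` from `x` is `exp (-d x y)`. Let `x` lie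
at height `D` on a geodesic from `1` to `p`. By hyperbolicity, reaching a point of the shadow of `x`
from `1` rather than from `x` costs a factor `exp (-D)`, and a decomposition according to the last
visit turns this into the bound `≲ exp (-D)` for the probability that the walk ever enters the
shadow. Balls of the boundary lie in shadows, which gives the upper bound for the harmonic measure.
Conversely, the walk hits `x` with probability `≈ exp (-D)`, and from there on it stays in the
direction of `p` as soon as it avoids a shadow of small measure around `1`, which gives the lower
bound.

The points `x` exist because a hyperbolic metric quasi-isometric to a word metric is geodesic up to
a bounded error. The proof follows that of the Morse lemma, but a group has no geodesics: the point
at height `t` between `a` and `b` is virtual and is represented by its distance function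
`x ↦ max (d x a - t) (d x b - (d a b - t))`, which satisfies the same four point condition.
-/

section Geometry

variable {X Y : Type*} {d : X → X → ℝ} {dY : Y → Y → ℝ} {δ c L Λ M t : ℝ} {a b x y : X}

lemma IsMetricFun.nonneg (hd : IsMetricFun d) (x y : X) : 0 ≤ d x y := by
  have h := hd.triangle x y x
  rw [hd.refl, hd.symm y x] at h
  linarith

lemma IsMetricFun.gromov_nonneg (hd : IsMetricFun d) (w x y : X) : 0 ≤ gromov d w x y := by
  have h := hd.triangle x w y
  rw [hd.symm w y] at h
  unfold gromov
  linarith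

lemma IsMetricFun.gromov_comm (hd : IsMetricFun d) (w x y : X) :
    gromov d w x y = gromov d w y x := by
  unfold gromov
  rw [hd.symm x y, add_comm (d x w)]

lemma IsMetricFun.gromov_le_dist (hd : IsMetricFun d) (w x y : X) : gromov d w x y ≤ d w y := by
  have h := hd.triangle x y w
  rw [hd.symm w y]
  unfold gromov
  linarith

lemma IsMetricFun.gromov_add_gromov (hd : IsMetricFun d) (w x y : X) :
    gromov d w x y + gromov d x w y = d w x := by
  unfold gromov
  rw [hd.symm x w, hd.symm y w, hd.symm x y]
  ring

lemma IsHyperbolicWith.nonneg [Nonempty X] (h : IsHyperbolicWith d δ) : 0 ≤ δ := by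
  obtain ⟨x⟩ := ‹Nonempty X›
  have hx := h x x x x
  rwa [min_self, sub_le_self_iff] at hx

lemma IsHyperbolicWith.sub_le_gromov (h : IsHyperbolicWith d δ) {w x y z : X} {r : ℝ}
    (hxy : r ≤ gromov d w x y) (hxz : r ≤ gromov d w x z) : r - δ ≤ gromov d w y z :=
  (sub_le_sub_right (le_min hxy hxz) δ).trans (h w x y z)

/-- `D` satisfies the four point condition of a distance to a (possibly virtual) point of a
`δ`-hyperbolic space. -/
def IsHyperbolicFun (d : X → X → ℝ) (δ : ℝ) (D : X → ℝ) : Prop :=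
  ∀ x y z, D x + d y z ≤ max (D y + d x z) (D z + d x y) + 2 * δ

lemma IsHyperbolicWith.isHyperbolicFun_dist (h : IsHyperbolicWith d δ) (w : X) :
    IsHyperbolicFun d δ (fun x => d x w) := by
  intro x y z
  have hxyz := h w x y z
  unfold gromov at hxyz
  rcases min_cases ((d x w + d y w - d x y) / 2) ((d x w + d z w - d x z) / 2) with h' | h'
  · linarith [le_max_right (d y w + d x z) (d z w + d x y)]
  · linarith [le_max_left (d y w + d x z) (d z w + d x y)]

lemma IsHyperbolicFun.sub_const {D : X → ℝ} (h : IsHyperbolicFun d δ D) (t : ℝ) :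
    IsHyperbolicFun d δ (fun x => D x - t) := by
  intro x y z
  have hxyz := h x y z
  rw [show D y - t + d x z = D y + d x z - t by ring,
    show D z - t + d x y = D z + d x y - t by ring, max_sub_sub_right]
  linarith

lemma IsHyperbolicFun.max {D D' : X → ℝ} (h : IsHyperbolicFun d δ D)
    (h' : IsHyperbolicFun d δ D') : IsHyperbolicFun d δ (fun x => max (D x) (D' x)) := by
  intro x y z
  rw [max_add]
  refine max_le ((h x y z).trans ?_) ((h' x y z).trans ?_) <;> gcongr <;> simp

/-- Distance from `x` to the virtual point at height `t` on a geodesic from `a` to `b`, up to an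
additive error in a hyperbolic space. -/
def segDist (d : X → X → ℝ) (a b : X) (t : ℝ) (x : X) : ℝ :=
  max (d x a - t) (d x b - (d a b - t))

lemma segDist_swap (hd : IsMetricFun d) (a b : X) (t : ℝ) (x : X) :
    segDist d b a (d a b - t) x = segDist d a b t x := by
  rw [segDist, segDist, max_comm, hd.symm b a, sub_sub_cancel]

lemma segDist_left (hd : IsMetricFun d) (a b : X) (ht : 0 ≤ t) : segDist d a b t a = t := by
  rw [segDist, hd.refl, sub_sub_cancel, max_eq_right (by linarith)]

lemma segDist_right (hd : IsMetricFun d) (ht : t ≤ d a b) :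
    segDist d a b t b = d a b - t := by
  rw [← segDist_swap hd, segDist_left hd _ _ (sub_nonneg.2 ht)]

lemma IsHyperbolicWith.isHyperbolicFun_segDist (h : IsHyperbolicWith d δ) (a b : X) (t : ℝ) :
    IsHyperbolicFun d δ (segDist d a b t) :=
  ((h.isHyperbolicFun_dist a).sub_const t).max ((h.isHyperbolicFun_dist b).sub_const _)

/-- Every virtual point of a segment is within `c` of an actual point: `(X, d)` is a geodesic
space up to a bounded error. -/
def RoughlyGeodesic (d : X → X → ℝ) (c : ℝ) : Prop :=
  ∀ a b : X, ∀ t ∈ Icc 0 (d a b), ∃ x, segDist d a b t x ≤ c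

lemma RoughlyGeodesic.nonneg [Nonempty X] (h : RoughlyGeodesic d c) (hd : IsMetricFun d) :
    0 ≤ c := by
  obtain ⟨a⟩ := ‹Nonempty X›
  obtain ⟨x, hx⟩ := h a a 0 ⟨le_rfl, hd.nonneg a a⟩
  linarith [hd.nonneg x a, (max_le_iff.1 hx).1]

lemma IsMetricFun.le_dist_of_segDist_le (hd : IsMetricFun d) (hx : segDist d a b t x ≤ c) :
    t - c ≤ d a x := by
  linarith [(max_le_iff.1 hx).2, hd.triangle a x b]

lemma IsMetricFun.le_gromov_of_segDist_le (hd : IsMetricFun d) (hx : segDist d a b t x ≤ c) :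
    t - c ≤ gromov d a x b := by
  have hax := hd.le_dist_of_segDist_le hx
  have hxb := (max_le_iff.1 hx).2
  unfold gromov
  rw [hd.symm x a, hd.symm b a]
  linarith

/-- Every two points are joined by a discrete quasigeodesic with jumps at most `L`. -/
def HasQuasigeodesicChains (d : X → X → ℝ) (L Λ c : ℝ) : Prop :=
  ∀ x y, ∃ (n : ℕ) (p : ℕ → X), p 0 = x ∧ p n = y ∧ (∀ i < n, d (p i) (p (i + 1)) ≤ L) ∧
    ∀ i j, i ≤ j → j ≤ n → (j - i : ℝ) ≤ Λ * d (p i) (p j) + c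

-- Halving the chain costs `δ` each time, hence the logarithmic loss `k` for length `2 ^ k`.
lemma IsHyperbolicFun.two_mul_le_of_chain {D : X → ℝ} (hD : IsHyperbolicFun d δ D)
    (hd : IsMetricFun d) (hL : 0 ≤ L) {p : ℕ → X} {k i j : ℕ} (hij : i ≤ j) (hjk : j ≤ i + 2 ^ k)
    (hfar : ∀ m ∈ Icc i j, M ≤ D (p m)) (hstep : ∀ m ∈ Ico i j, d (p m) (p (m + 1)) ≤ L) :
    2 * M ≤ D (p i) + D (p j) - d (p i) (p j) + L + 2 * (k * δ) := by
  induction k generalizing i j with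
  | zero =>
    have hi := hfar i (left_mem_Icc.2 hij)
    have hj := hfar j (right_mem_Icc.2 hij)
    have hdist : d (p i) (p j) ≤ L := by
      rcases hij.eq_or_lt with rfl | hlt
      · rwa [hd.refl]
      · obtain rfl : j = i + 1 := by rw [pow_zero] at hjk; omega
        exact hstep i (left_mem_Ico.2 hlt)
    simp only [Nat.cast_zero, zero_mul, mul_zero]
    linarith
  | succ k ih =>
    obtain ⟨m, him, hmj, hmi, hjm⟩ : ∃ m, i ≤ m ∧ m ≤ j ∧ m ≤ i + 2 ^ k ∧ j ≤ m + 2 ^ k :=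
      ⟨min (i + 2 ^ k) j, by rw [pow_succ] at hjk; omega⟩
    have hleft := ih him hmi (fun q hq => hfar q (Icc_subset_Icc_right hmj hq))
      (fun q hq => hstep q (Ico_subset_Ico_right hmj hq))
    have hright := ih hmj hjm (fun q hq => hfar q (Icc_subset_Icc_left him hq))
      (fun q hq => hstep q (Ico_subset_Ico_left him hq))
    have hmid := hD (p m) (p i) (p j)
    rw [hd.symm (p m) (p i)] at hmid
    push_cast
    rcases max_cases (D (p i) + d (p m) (p j)) (D (p j) + d (p i) (p m)) with h | h <;> linarith

lemma exists_worst_height (hab : 0 ≤ d a b) {A : Finset X} (hA : A.Nonempty) :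
    ∃ t ∈ Icc 0 (d a b), ∃ M, (∀ x ∈ A, M ≤ segDist d a b t x) ∧
      ∀ s ∈ Icc 0 (d a b), ∃ x ∈ A, segDist d a b s x ≤ M := by
  let f : ℝ → ℝ := fun t => A.inf' hA (segDist d a b t)
  have hf : Continuous f := by
    refine Continuous.finset_inf'_apply hA fun x _ => ?_
    unfold segDist
    fun_prop
  obtain ⟨t, ht, hmax⟩ := isCompact_Icc.exists_isMaxOn (nonempty_Icc.2 hab) hf.continuousOn
  refine ⟨t, ht, f t, fun x hx => Finset.inf'_le _ hx, fun s hs => ?_⟩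
  obtain ⟨x, hx, hxs⟩ := Finset.exists_mem_eq_inf' hA (segDist d a b s)
  exact ⟨x, hx, hxs ▸ hmax hs⟩

lemma exists_mem_near_lower_height (hd : IsMetricFun d) {A : Finset X} (ha : a ∈ A) (hM : 0 ≤ M)
    (hMt : M ≤ t) (htb : t ≤ d a b) (hclose : ∀ s ∈ Icc 0 (d a b), ∃ x ∈ A, segDist d a b s x ≤ M) :
    ∃ x ∈ A, d x a ≤ t - M ∧ d x b ≤ d a b - t + 3 * M := by
  rcases le_or_gt (2 * M) t with h | h
  · obtain ⟨x, hx, hxM⟩ := hclose (t - 2 * M) ⟨by linarith, by linarith⟩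
    obtain ⟨hxa, hxb⟩ := max_le_iff.1 hxM
    exact ⟨x, hx, by linarith, by linarith⟩
  · exact ⟨a, ha, by rw [hd.refl]; linarith, by linarith⟩

lemma exists_mem_near_upper_height (hd : IsMetricFun d) {A : Finset X} (hb : b ∈ A) (hM : 0 ≤ M)
    (ht : 0 ≤ t) (hMt : M ≤ d a b - t)
    (hclose : ∀ s ∈ Icc 0 (d a b), ∃ x ∈ A, segDist d a b s x ≤ M) :
    ∃ y ∈ A, d y b ≤ d a b - t - M ∧ d y a ≤ t + 3 * M := by
  have hclose' : ∀ s ∈ Icc 0 (d b a), ∃ x ∈ A, segDist d b a s x ≤ M := by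
    intro s hs
    obtain ⟨x, hx, hxM⟩ :=
      hclose (d a b - s) ⟨sub_nonneg.2 (hd.symm a b ▸ hs.2), by linarith [hs.1]⟩
    exact ⟨x, hx, by rwa [← segDist_swap hd, sub_sub_cancel] at hxM⟩
  obtain ⟨y, hy, hyb, hya⟩ :=
    exists_mem_near_lower_height hd hb hM hMt (by rw [hd.symm b a]; linarith) hclose'
  exact ⟨y, hy, hyb, by rw [hd.symm b a] at hya; linarith⟩

lemma IsHyperbolicWith.dist_le_of_flanking (hh : IsHyperbolicWith d δ) (hd : IsMetricFun d)
    (hM : 0 ≤ M) (hxa : d x a ≤ t - M) (hxb : d x b ≤ d a b - t + 3 * M)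
    (hyb : d y b ≤ d a b - t - M) (hya : d y a ≤ t + 3 * M) : d x y ≤ 6 * M + 2 * δ := by
  have h : d x y + d a b ≤ max (d a y + d x b) (d b y + d x a) + 2 * δ :=
    hh.isHyperbolicFun_dist y x a b
  rw [hd.symm a y, hd.symm b y] at h
  rcases max_cases (d y a + d x b) (d y b + d x a) with h' | h' <;> linarith

-- The geodesic from `x` to `y` passes near the virtual point at height `t`.
lemma IsHyperbolicWith.segDist_add_segDist_le_of_flanking (hh : IsHyperbolicWith d δ)
    (hd : IsMetricFun d) (hδM : δ < M) (hM : 0 < M) (hxa : d x a ≤ t - M)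
    (hyb : d y b ≤ d a b - t - M) (hx : M ≤ segDist d a b t x) (hy : M ≤ segDist d a b t y) :
    segDist d a b t x + segDist d a b t y ≤ d x y + 2 * δ := by
  have hx_eq : segDist d a b t x = d x b - (d a b - t) :=
    max_eq_right (by rcases le_max_iff.1 hx with h | h <;> linarith)
  have hy_eq : segDist d a b t y = d y a - t :=
    max_eq_left (by rcases le_max_iff.1 hy with h | h <;> linarith)
  have h : d x b + d a y ≤ max (d a b + d x y) (d y b + d x a) + 2 * δ :=
    hh.isHyperbolicFun_dist b x a y
  have hax := hd.triangle a x b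
  have hay := hd.triangle a y b
  rw [hd.symm a x] at hax
  rw [hd.symm a y] at h hay
  rw [hx_eq, hy_eq]
  rcases max_cases (d a b + d x y) (d y b + d x a) with h' | h' <;> linarith

lemma eventually_affine_lt_two_pow (α β : ℝ) : ∀ᶠ k : ℕ in atTop, α * k + β < 2 ^ k := by
  have hlim := ((tendsto_pow_const_div_const_pow_of_one_lt 1 (one_lt_two (α := ℝ))).const_mul α).add
    ((tendsto_pow_const_div_const_pow_of_one_lt 0 (one_lt_two (α := ℝ))).const_mul β)
  rw [mul_zero, mul_zero, add_zero] at hlim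
  filter_upwards [hlim.eventually_lt_const one_pos] with k hk
  have hpos : (0 : ℝ) < 2 ^ k := by positivity
  rwa [mul_div_assoc', mul_div_assoc', ← add_div, div_lt_one hpos, pow_one, pow_zero, mul_one] at hk

lemma two_pow_clog_le (m : ℕ) : 2 ^ Nat.clog 2 m ≤ 2 * m + 1 := by
  rcases le_or_gt m 1 with hm | hm
  · rw [Nat.clog_of_right_le_one hm]
    omega
  · have h := Nat.pow_pred_clog_lt_self one_lt_two hm
    have hpos := Nat.clog_pos one_lt_two hm
    rw [← Nat.succ_pred_eq_of_pos hpos, pow_succ]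
    omega

lemma exists_bound_of_le_add_clog (a : ℝ) {α β : ℝ} (hδ : 0 ≤ δ) (hα : 0 ≤ α) :
    ∃ M₀ : ℝ, ∀ (M : ℝ) (m : ℕ), M ≤ a + Nat.clog 2 m * δ → m ≤ α * M + β → M ≤ M₀ := by
  obtain ⟨k₀, hk₀⟩ := eventually_atTop.1
    (eventually_affine_lt_two_pow (2 * α * δ) (2 * (α * a + β) + 1))
  refine ⟨a + k₀ * δ, fun M m hM hm => hM.trans ?_⟩
  have hk : Nat.clog 2 m < k₀ := by
    by_contra! hk
    have hpow : ((2 ^ Nat.clog 2 m : ℕ) : ℝ) ≤ (2 * m + 1 : ℕ) := mod_cast two_pow_clog_le m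
    push_cast at hpow
    linarith [hk₀ _ hk, mul_le_mul_of_nonneg_left hM hα]
  gcongr

lemma IsHyperbolicWith.le_of_chain (hh : IsHyperbolicWith d δ) (hd : IsMetricFun d) (hL : 0 ≤ L)
    (hΛ : 0 ≤ Λ) {M₀ : ℝ} (hM₀ : ∀ (M : ℝ) (m : ℕ), M ≤ L / 2 + δ + Nat.clog 2 m * δ →
      m ≤ 6 * Λ * M + (2 * Λ * δ + c) → M ≤ M₀) {p : ℕ → X} {i j : ℕ} (hij : i ≤ j)
    (hfar : ∀ m ∈ Icc i j, M ≤ segDist d a b t (p m))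
    (hstep : ∀ m ∈ Ico i j, d (p m) (p (m + 1)) ≤ L)
    (hqg : (j - i : ℝ) ≤ Λ * d (p i) (p j) + c) (hdist : d (p i) (p j) ≤ 6 * M + 2 * δ)
    (hthin : segDist d a b t (p i) + segDist d a b t (p j) ≤ d (p i) (p j) + 2 * δ) : M ≤ M₀ := by
  have hlen : j ≤ i + 2 ^ Nat.clog 2 (j - i) := by
    have := Nat.le_pow_clog one_lt_two (j - i)
    omega
  have hlog := (hh.isHyperbolicFun_segDist a b t).two_mul_le_of_chain hd hL hij hlen hfar hstep
  refine hM₀ M (j - i) (by linarith) ?_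
  rw [Nat.cast_sub hij]
  linarith [mul_le_mul_of_nonneg_left hdist hΛ]

-- The argument of the Morse lemma, run with virtual points in place of a geodesic.
theorem HasQuasigeodesicChains.exists_roughlyGeodesic [Nonempty X]
    (hc : HasQuasigeodesicChains d L Λ c) (hd : IsMetricFun d) (hh : IsHyperbolicWith d δ)
    (hL : 0 ≤ L) (hΛ : 0 ≤ Λ) : ∃ c₀, RoughlyGeodesic d c₀ := by
  classical
  have hδ := hh.nonneg
  obtain ⟨M₀, hM₀⟩ := exists_bound_of_le_add_clog (L / 2 + δ) (α := 6 * Λ) (β := 2 * Λ * δ + c) hδ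
    (by positivity)
  refine ⟨max M₀ δ, fun a b => ?_⟩
  obtain ⟨n, p, hp₀, hpn, hstep, hqg⟩ := hc a b
  have mem_iff (x : X) : x ∈ (Finset.range (n + 1)).image p ↔ ∃ i ≤ n, p i = x := by
    simp
  have ha := (mem_iff a).2 ⟨0, n.zero_le, hp₀⟩
  have hb := (mem_iff b).2 ⟨n, le_rfl, hpn⟩
  obtain ⟨t, ht, M, hfar, hclose⟩ := exists_worst_height (hd.nonneg a b) ⟨a, ha⟩
  suffices hM : M ≤ max M₀ δ from fun s hs =>
    let ⟨x, _, hx⟩ := hclose s hs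
    ⟨x, hx.trans hM⟩
  rcases le_or_gt M δ with hMδ | hδM
  · exact le_max_of_le_right hMδ
  have hM : 0 < M := hδ.trans_lt hδM
  obtain ⟨x, hx, hxa, hxb⟩ := exists_mem_near_lower_height hd ha hM.le
    ((hfar a ha).trans_eq (segDist_left hd a b ht.1)) ht.2 hclose
  obtain ⟨y, hy, hyb, hya⟩ := exists_mem_near_upper_height hd hb hM.le ht.1
    ((hfar b hb).trans_eq (segDist_right hd ht.2)) hclose
  have hdist := hh.dist_le_of_flanking hd hM.le hxa hxb hyb hya
  have hthin := hh.segDist_add_segDist_le_of_flanking hd hδM hM hxa hyb (hfar x hx) (hfar y hy)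
  obtain ⟨i, hi, rfl⟩ := (mem_iff x).1 hx
  obtain ⟨j, hj, rfl⟩ := (mem_iff y).1 hy
  have hfar' (k l : ℕ) (hl : l ≤ n) : ∀ m ∈ Icc k l, M ≤ segDist d a b t (p m) :=
    fun m hm => hfar _ ((mem_iff _).2 ⟨m, hm.2.trans hl, rfl⟩)
  have hstep' (k l : ℕ) (hl : l ≤ n) : ∀ m ∈ Ico k l, d (p m) (p (m + 1)) ≤ L :=
    fun m hm => hstep m (hm.2.trans_le hl)
  refine le_max_of_le_left ?_
  rcases le_total i j with hij | hji
  · exact hh.le_of_chain hd hL hΛ hM₀ hij (hfar' i j hj) (hstep' i j hj) (hqg i j hij hj) hdist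
      hthin
  · rw [hd.symm] at hdist
    rw [hd.symm, add_comm] at hthin
    exact hh.le_of_chain hd hL hΛ hM₀ hji (hfar' j i hi) (hstep' j i hi) (hqg j i hji hi) hdist
      hthin

lemma exists_lift_chain {f : X → Y} {C : ℝ} (hC : 0 ≤ C) (hdY : IsMetricFun dY)
    (hf : ∀ y, ∃ x, dY (f x) y ≤ C) {n : ℕ} {q : ℕ → Y} (hq₀ : q 0 = f x) (hqn : q n = f y) :
    ∃ p : ℕ → X, p 0 = x ∧ p (n + 1) = y ∧ ∀ i, dY (f (p i)) (q (min i n)) ≤ C := by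
  choose g hg using hf
  refine ⟨fun i => if i = 0 then x else if i = n + 1 then y else g (q (min i n)), by simp, by simp,
    fun i => ?_⟩
  beta_reduce
  split_ifs with h₀ hn
  · rwa [h₀, Nat.zero_min, hq₀, hdY.refl]
  · rwa [hn, min_eq_right n.le_succ, hqn, hdY.refl]
  · exact hg _

theorem HasQuasigeodesicChains.of_quasiIsometric (h : HasQuasigeodesicChains dY L Λ c)
    (hdY : IsMetricFun dY) (hL : 0 ≤ L) (hΛ : 0 ≤ Λ) (hqi : QuasiIsometric d dY) :
    ∃ L' Λ' c', 0 ≤ L' ∧ 0 ≤ Λ' ∧ HasQuasigeodesicChains d L' Λ' c' := by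
  obtain ⟨f, K, k, C, hK, hk, hC, hf, hsurj⟩ := hqi
  have hK₀ : 0 < K := one_pos.trans_le hK
  refine ⟨K * (L + 2 * C + k), Λ * K, Λ * (2 * C + k) + c + 1, by positivity, by positivity,
    fun x y => ?_⟩
  obtain ⟨n, q, hq₀, hqn, hstep, hqg⟩ := h (f x) (f y)
  -- The last point of the chain is repeated, so that both ends can be prescribed even if `n = 0`.
  obtain ⟨p, hp₀, hpn, hp⟩ := exists_lift_chain hC hdY hsurj hq₀ hqn
  refine ⟨n + 1, p, hp₀, hpn, fun i hi => ?_, fun i j hij hj => ?_⟩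
  · have hq : dY (q (min i n)) (q (min (i + 1) n)) ≤ L := by
      rcases (Nat.le_of_lt_succ hi).eq_or_lt with rfl | hin
      · rwa [min_self, min_eq_right i.le_succ, hdY.refl]
      · rw [min_eq_left hin.le, min_eq_left hin]
        exact hstep i hin
    have hle := (hf (p i) (p (i + 1))).1
    have hp' := hp (i + 1)
    rw [hdY.symm] at hp'
    have htri := hdY.triangle (f (p i)) (q (min i n)) (f (p (i + 1)))
    have htri' := hdY.triangle (q (min i n)) (q (min (i + 1) n)) (f (p (i + 1)))
    rw [mul_comm, ← div_le_iff₀ hK₀]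
    linarith [hp i]
  · have hq := hqg (min i n) (min j n) (min_le_min_right n hij) (min_le_right j n)
    have hmin : (j - i : ℝ) ≤ (min j n : ℕ) - (min i n : ℕ) + 1 := by
      have : j + min i n ≤ min j n + 1 + i := by omega
      have : (j + (min i n : ℕ) : ℝ) ≤ (min j n : ℕ) + 1 + i := mod_cast this
      linarith
    have hdist : dY (q (min i n)) (q (min j n)) ≤ 2 * C + k + K * d (p i) (p j) := by
      have hpi := hp i
      rw [hdY.symm] at hpi
      linarith [hp j, (hf (p i) (p j)).2, hdY.triangle (q (min i n)) (f (p i)) (q (min j n)),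
        hdY.triangle (f (p i)) (f (p j)) (q (min j n))]
    linarith [mul_le_mul_of_nonneg_left hdist hΛ]

end Geometry

section WordMetric

variable {S : Finset G}

lemma Generates.exists_list (hS : Generates S) (g : G) :
    ∃ l : List G, l.length = wordLength S g ∧ (∀ a ∈ l, a ∈ S ∨ a⁻¹ ∈ S) ∧ l.prod = g := by
  have hg : g ∈ (Subgroup.closure (S : Set G)).toSubmonoid := by rw [hS]; trivial
  rw [Subgroup.closure_toSubmonoid] at hg
  obtain ⟨l, hl, hprod⟩ := Submonoid.exists_list_of_mem_closure hg
  exact Nat.sInf_mem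
    (s := {n | ∃ l : List G, l.length = n ∧ (∀ a ∈ l, a ∈ S ∨ a⁻¹ ∈ S) ∧ l.prod = g})
    ⟨l.length, l, rfl, hl, hprod⟩

lemma wordLength_prod_le {l : List G} (h : ∀ a ∈ l, a ∈ S ∨ a⁻¹ ∈ S) :
    wordLength S l.prod ≤ l.length :=
  Nat.sInf_le ⟨l, rfl, h, rfl⟩

lemma Generates.wordLength_mul_le (hS : Generates S) (g h : G) :
    wordLength S (g * h) ≤ wordLength S g + wordLength S h := by
  obtain ⟨l, hlen, hl, rfl⟩ := hS.exists_list g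
  obtain ⟨l', hlen', hl', rfl⟩ := hS.exists_list h
  rw [← hlen, ← hlen', ← List.prod_append, ← List.length_append]
  exact wordLength_prod_le fun a ha => (List.mem_append.1 ha).elim (hl a) (hl' a)

lemma Generates.wordLength_inv_le (hS : Generates S) (g : G) :
    wordLength S g⁻¹ ≤ wordLength S g := by
  obtain ⟨l, hlen, hl, rfl⟩ := hS.exists_list g
  have hle := wordLength_prod_le (S := S) (l := (l.map (·⁻¹)).reverse) fun a ha => by
    obtain ⟨b, hb, rfl⟩ := List.mem_map.1 (List.mem_reverse.1 ha)
    rw [inv_inv]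
    exact (hl b hb).symm
  rwa [← List.prod_inv_reverse, List.length_reverse, List.length_map, hlen] at hle

lemma Generates.isMetricFun_wordDist (hS : Generates S) : IsMetricFun (wordDist S) where
  refl x := by
    have h := wordLength_prod_le (S := S) (l := []) (by simp)
    rw [List.prod_nil, List.length_nil, Nat.le_zero] at h
    rw [wordDist, inv_mul_cancel, h, Nat.cast_zero]
  pos x y hxy := by
    obtain ⟨l, hlen, -, hprod⟩ := hS.exists_list (x⁻¹ * y)
    refine Nat.cast_pos.2 (Nat.pos_of_ne_zero fun h => hxy ?_)
    rw [h, List.length_eq_zero_iff] at hlen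
    rwa [hlen, List.prod_nil, eq_comm, inv_mul_eq_one] at hprod
  symm x y := by
    have h (x y : G) : wordDist S x y ≤ wordDist S y x := by
      have := hS.wordLength_inv_le (y⁻¹ * x)
      rw [mul_inv_rev, inv_inv] at this
      exact Nat.cast_le.2 this
    exact le_antisymm (h x y) (h y x)
  triangle x y z := by
    have h := hS.wordLength_mul_le (x⁻¹ * y) (y⁻¹ * z)
    rw [mul_assoc, mul_inv_cancel_left] at h
    unfold wordDist
    exact mod_cast h

lemma Generates.hasQuasigeodesicChains_wordDist (hS : Generates S) :
    HasQuasigeodesicChains (wordDist S) 1 1 0 := by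
  intro x y
  obtain ⟨l, hlen, hl, hprod⟩ := hS.exists_list (x⁻¹ * y)
  let p : ℕ → G := fun i => x * (l.take i).prod
  have hp₀ : p 0 = x := by simp [p]
  have hpn : p l.length = y := by simp [p, hprod]
  have hle (i j : ℕ) (hij : i ≤ j) : wordDist S (p i) (p j) ≤ j - i := by
    have hsplit : (l.take j).prod = (l.take i).prod * ((l.take j).drop i).prod := by
      rw [← List.prod_take_mul_prod_drop (l.take j) i, List.take_take, min_eq_left hij]
    have hword := wordLength_prod_le (S := S) (l := (l.take j).drop i)
      fun a ha => hl a (List.mem_of_mem_take (List.mem_of_mem_drop ha))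
    have hlen' : ((l.take j).drop i).length ≤ j - i := by
      rw [List.length_drop, List.length_take]
      omega
    rw [wordDist, show (p i)⁻¹ * p j = ((l.take j).drop i).prod by simp only [p, hsplit]; group,
      ← Nat.cast_sub hij]
    exact Nat.cast_le.2 (hword.trans hlen')
  refine ⟨l.length, p, hp₀, hpn, fun i _ => ?_, fun i j _ hj => ?_⟩
  · simpa using hle i (i + 1) i.le_succ
  · have hd := hS.isMetricFun_wordDist
    have hxy : wordDist S (p 0) (p l.length) = l.length := by rw [hp₀, hpn, wordDist, ← hlen]
    have hstart := hle 0 i i.zero_le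
    rw [Nat.cast_zero] at hstart
    linarith [hle j l.length hj, hd.triangle (p 0) (p i) (p l.length),
      hd.triangle (p i) (p j) (p l.length)]

theorem MemD.exists_roughlyGeodesic {d : G → G → ℝ} (hd : MemD d) : ∃ c, RoughlyGeodesic d c := by
  obtain ⟨hmetric, -, ⟨δ, -, hh⟩, S, hS, hqi⟩ := hd
  obtain ⟨L, Λ, c, hL, hΛ, hc⟩ := hS.hasQuasigeodesicChains_wordDist.of_quasiIsometric
    hS.isMetricFun_wordDist zero_le_one zero_le_one hqi
  exact hc.exists_roughlyGeodesic hmetric hh hL hΛ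

end WordMetric

section Increments

variable {α : Type*} {l l' : List α} {ω : ℕ → α}

/-- The increment sequences that start with the word `l`. -/
def pathCylinder (l : List α) : Set (ℕ → α) := {ω | (List.range l.length).map ω = l}

/-- The increments after time `n`. -/
def shift (n : ℕ) (ω : ℕ → α) : ℕ → α := fun k => ω (n + k)

lemma map_range_mem_pathCylinder (ω : ℕ → α) (n : ℕ) :
    ω ∈ pathCylinder ((List.range n).map ω) := by
  simp [pathCylinder]

lemma map_range_eq_take (hω : ω ∈ pathCylinder l) {k : ℕ} (hk : k ≤ l.length) :
    (List.range k).map ω = l.take k := by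
  have h : (List.range l.length).map ω = l := hω
  conv_rhs => rw [← h, ← List.map_take, List.take_range, min_eq_left hk]

lemma pathCylinder_eq_ofPred_get (l : List α) :
    pathCylinder l = {ω | ∀ i : Fin l.length, ω i = l.get i} := by
  ext ω
  simp [pathCylinder, List.ext_get_iff, Fin.forall_iff]

lemma pathCylinder_append (l l' : List α) :
    pathCylinder (l ++ l') = pathCylinder l ∩ shift l.length ⁻¹' pathCylinder l' := by
  ext ω
  have hmap : (List.range (l ++ l').length).map ω =
      (List.range l.length).map ω ++ (List.range l'.length).map (shift l.length ω) := by
    rw [List.length_append, List.range_add, List.map_append, List.map_map]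
    rfl
  change _ = _ ↔ _ = _ ∧ _ = _
  rw [hmap]
  exact ⟨fun h => List.append_inj h (by simp), fun h => congrArg₂ _ h.1 h.2⟩

lemma pathCylinder_inter (hlen : l.length ≤ l'.length)
    (hne : (pathCylinder l ∩ pathCylinder l').Nonempty) :
    pathCylinder l ∩ pathCylinder l' = pathCylinder l' := by
  obtain ⟨ω, hω, hω'⟩ := hne
  refine inter_eq_right.2 fun η hη => ?_
  have hl : l = l'.take l.length := (Eq.symm hω).trans (map_range_eq_take hω' hlen)
  exact (map_range_eq_take hη hlen).trans hl.symm

lemma isPiSystem_pathCylinder : IsPiSystem (range (pathCylinder (α := α))) := by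
  rintro _ ⟨l, rfl⟩ _ ⟨l', rfl⟩ hne
  rcases le_total l.length l'.length with h | h
  · exact ⟨l', (pathCylinder_inter h hne).symm⟩
  · rw [inter_comm] at hne ⊢
    exact ⟨l, (pathCylinder_inter h hne).symm⟩

variable [MeasurableSpace α]

lemma measurable_shift (n : ℕ) : Measurable (shift (α := α) n) :=
  measurable_pi_lambda _ fun _ => measurable_pi_apply _

variable [MeasurableSingletonClass α]

lemma measurableSet_pathCylinder (l : List α) : MeasurableSet (pathCylinder l) := by
  rw [pathCylinder_eq_ofPred_get, ofPred_forall]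
  exact MeasurableSet.iInter fun i => measurable_pi_apply _ (measurableSet_singleton _)

lemma pi_eq_generateFrom_pathCylinder [Countable α] :
    (MeasurableSpace.pi : MeasurableSpace (ℕ → α)) =
      MeasurableSpace.generateFrom (range pathCylinder) := by
  refine le_antisymm (iSup_le fun i => ?_) (MeasurableSpace.generateFrom_le ?_)
  · let _ := MeasurableSpace.generateFrom (range (pathCylinder (α := α)))
    refine Measurable.comap_le (measurable_to_countable' fun a => ?_)
    have hunion : (fun ω : ℕ → α => ω i) ⁻¹' {a} =
        ⋃ l ∈ {l : List α | l.length = i}, pathCylinder (l ++ [a]) := by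
      ext ω
      simp only [mem_preimage, mem_singleton_iff, mem_iUnion, exists_prop, pathCylinder_append]
      constructor
      · rintro rfl
        exact ⟨(List.range i).map ω, by simp, map_range_mem_pathCylinder ω i,
          by simp [pathCylinder, shift]⟩
      · rintro ⟨l, rfl, -, hω⟩
        simpa [pathCylinder, shift] using hω
    rw [hunion]
    exact MeasurableSet.biUnion (to_countable _) fun l _ =>
      MeasurableSpace.measurableSet_generateFrom ⟨_, rfl⟩
  · rintro _ ⟨l, rfl⟩
    exact measurableSet_pathCylinder l

end Increments

section PathMeasure

variable {α : Type*} {μ : α → ℝ}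

lemma prod_map_nonneg (hμ : ∀ a, 0 ≤ μ a) (l : List α) :
    0 ≤ (l.map μ).prod :=
  List.prod_nonneg (by simpa using fun a _ => hμ a)

variable [MeasurableSpace α] {P : Measure (ℕ → α)}

lemma IsWalkMeasure.measure_pathCylinder (hP : IsWalkMeasure μ P) (hμ : ∀ a, 0 ≤ μ a)
    (l : List α) : P (pathCylinder l) = ENNReal.ofReal (l.map μ).prod := by
  rw [pathCylinder_eq_ofPred_get, hP.2 l.length l.get,
    ← ENNReal.ofReal_prod_of_nonneg fun i _ => hμ _, ← Fin.prod_univ_fun_getElem]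
  rfl

variable [Countable α] [MeasurableSingletonClass α]

theorem IsWalkMeasure.measure_pathCylinder_inter_shift (hP : IsWalkMeasure μ P)
    (hμ : ∀ a, 0 ≤ μ a) (l : List α) {E : Set (ℕ → α)} (hE : MeasurableSet E) :
    P (pathCylinder l ∩ shift l.length ⁻¹' E) = P (pathCylinder l) * P E := by
  have := hP.1
  have hmap (E : Set (ℕ → α)) (hE : MeasurableSet E) :
      (P.restrict (pathCylinder l)).map (shift l.length) E =
        P (pathCylinder l ∩ shift l.length ⁻¹' E) := by
    rw [Measure.map_apply (measurable_shift _) hE,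
      Measure.restrict_apply (measurable_shift _ hE), inter_comm]
  have heq : (P.restrict (pathCylinder l)).map (shift l.length) = P (pathCylinder l) • P := by
    refine ext_of_generate_finite _ pi_eq_generateFrom_pathCylinder isPiSystem_pathCylinder ?_ ?_
    · rintro _ ⟨l', rfl⟩
      rw [hmap _ (measurableSet_pathCylinder l'), ← pathCylinder_append, Measure.smul_apply,
        smul_eq_mul, hP.measure_pathCylinder hμ, hP.measure_pathCylinder hμ,
        hP.measure_pathCylinder hμ, List.map_append, List.prod_append,
        ENNReal.ofReal_mul (prod_map_nonneg hμ l)]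
    · simp [hmap]
  rw [← hmap E hE, heq, Measure.smul_apply, smul_eq_mul]

end PathMeasure

section FirstHit

variable {x y : G} {l : List G} {ω : ℕ → G}

lemma walkPos_add (n m : ℕ) (ω : ℕ → G) :
    walkPos (n + m) ω = walkPos n ω * walkPos m (shift n ω) := by
  unfold walkPos shift
  rw [List.range_add, List.map_append, List.prod_append, List.map_map]
  rfl

lemma walkPos_of_mem_pathCylinder (hω : ω ∈ pathCylinder l) {k : ℕ} (hk : k ≤ l.length) :
    walkPos k ω = (l.take k).prod := by
  rw [walkPos, map_range_eq_take hω hk]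

lemma walkPositions_eq_map_range (x : G) (l : List G) :
    walkPositions x l = (List.range (l.length + 1)).map fun k => x * (l.take k).prod := by
  induction l generalizing x with
  | nil => simp [walkPositions]
  | cons a l ih =>
    have hcons : walkPositions x (a :: l) = x :: walkPositions (x * a) l := by
      simp [walkPositions]
    rw [hcons, ih, List.length_cons, List.range_succ_eq_map (n := l.length + 1)]
    simp [List.map_map, Function.comp_def, mul_assoc]

lemma isFirstHitPath_iff :
    IsFirstHitPath x y l ↔ x * l.prod = y ∧ ∀ k < l.length, x * (l.take k).prod ≠ y := by
  unfold IsFirstHitPath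
  rw [walkPositions_eq_map_range, List.range_succ, List.map_append]
  simp

lemma isFirstHitPath_self_iff : IsFirstHitPath x x l ↔ l = [] := by
  rw [isFirstHitPath_iff]
  refine ⟨fun h => ?_, by rintro rfl; simp⟩
  by_contra hl
  exact h.2 0 (List.length_pos_iff.2 hl) (by simp)

lemma IsFirstHitPath.walkPos_length (hl : IsFirstHitPath x y l) (hω : ω ∈ pathCylinder l) :
    x * walkPos l.length ω = y := by
  rw [walkPos_of_mem_pathCylinder hω le_rfl, List.take_length]
  exact (isFirstHitPath_iff.1 hl).1

lemma IsFirstHitPath.length_le (hl : IsFirstHitPath x y l) (hω : ω ∈ pathCylinder l) {n : ℕ}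
    (hn : x * walkPos n ω = y) : l.length ≤ n := by
  by_contra! h
  rw [walkPos_of_mem_pathCylinder hω h.le] at hn
  exact (isFirstHitPath_iff.1 hl).2 n h hn

lemma exists_isFirstHitPath {n : ℕ} (hn : x * walkPos n ω = y) :
    ∃ l, IsFirstHitPath x y l ∧ ω ∈ pathCylinder l := by
  classical
  have hex : ∃ n, x * walkPos n ω = y := ⟨n, hn⟩
  have hω := map_range_mem_pathCylinder ω (Nat.find hex)
  refine ⟨_, isFirstHitPath_iff.2 ⟨Nat.find_spec hex, fun k hk => ?_⟩, hω⟩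
  rw [← walkPos_of_mem_pathCylinder hω hk.le]
  exact Nat.find_min hex (by simpa using hk)

lemma pairwise_disjoint_isFirstHitPath (x y : G) :
    Pairwise (Function.onFun Disjoint
      fun l : {l : List G // IsFirstHitPath x y l} => pathCylinder l.1) := by
  rintro ⟨l, hl⟩ ⟨l', hl'⟩ hne
  refine Set.disjoint_left.2 fun ω hω hω' => hne (Subtype.ext ?_)
  have hlen : l.length = l'.length :=
    le_antisymm (hl.length_le hω (hl'.walkPos_length hω'))
      (hl'.length_le hω' (hl.walkPos_length hω))
  have h : (List.range l.length).map ω = l := hω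
  rwa [hlen, show (List.range l'.length).map ω = l' from hω', eq_comm] at h

/-- The increment sequences for which the walk started at `x` hits `y` and its increments after the
first hitting time lie in `E`. -/
def hitThen (x y : G) (E : Set (ℕ → G)) : Set (ℕ → G) :=
  ⋃ l : {l : List G // IsFirstHitPath x y l}, pathCylinder l.1 ∩ shift l.1.length ⁻¹' E

lemma mem_hitThen {E : Set (ℕ → G)} :
    ω ∈ hitThen x y E ↔
      ∃ l, IsFirstHitPath x y l ∧ ω ∈ pathCylinder l ∧ shift l.length ω ∈ E := by
  simp [hitThen, and_left_comm]

/-- The event that the walk started at `x` visits `A`. -/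
def visitEvent (x : G) (A : Set G) : Set (ℕ → G) := {ω | ∃ n, x * walkPos n ω ∈ A}

lemma visitEvent_iUnion {ι : Sort*} (x : G) (A : ι → Set G) :
    visitEvent x (⋃ i, A i) = ⋃ i, visitEvent x (A i) := by
  ext ω
  simp only [visitEvent, mem_iUnion]
  exact exists_comm

/-- The event that the last visit to `A` of the walk started at `x` takes place at `y`. -/
def lastVisit (A : Set G) (x y : G) : Set (ℕ → G) :=
  {ω | ∃ n, x * walkPos n ω = y ∧ ∀ m > n, x * walkPos m ω ∉ A}

lemma lastVisit_eq_hitThen (A : Set G) (x y : G) :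
    lastVisit A x y = hitThen x y (lastVisit A y y) := by
  ext ω
  rw [mem_hitThen]
  constructor
  · rintro ⟨n, hn, hafter⟩
    obtain ⟨l, hl, hω⟩ := exists_isFirstHitPath hn
    obtain ⟨k, rfl⟩ := Nat.exists_eq_add_of_le (hl.length_le hω hn)
    refine ⟨l, hl, hω, k, ?_, fun m hm => ?_⟩
    · rwa [walkPos_add, ← mul_assoc, hl.walkPos_length hω] at hn
    · have := hafter (l.length + m) (by omega)
      rwa [walkPos_add, ← mul_assoc, hl.walkPos_length hω] at this
  · rintro ⟨l, hl, hω, k, hk, hafter⟩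
    refine ⟨l.length + k, ?_, fun m hm => ?_⟩
    · rwa [walkPos_add, ← mul_assoc, hl.walkPos_length hω]
    · obtain ⟨j, rfl⟩ := Nat.exists_eq_add_of_le (show l.length ≤ m by omega)
      rw [walkPos_add, ← mul_assoc, hl.walkPos_length hω]
      exact hafter j (by omega)

lemma pairwiseDisjoint_lastVisit (A : Set G) (x : G) : A.PairwiseDisjoint (lastVisit A x) := by
  refine fun y hy y' hy' hne => Set.disjoint_left.2 ?_
  rintro ω ⟨n, rfl, hn⟩ ⟨n', rfl, hn'⟩
  rcases lt_trichotomy n n' with h | rfl | h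
  · exact hn n' h hy'
  · exact hne rfl
  · exact hn' n h hy

lemma exists_mem_lastVisit {A : Set G} (hA : A.Finite)
    (htr : Tendsto (fun n => walkPos n ω) atTop cofinite) (hω : ω ∈ visitEvent x A) :
    ∃ y ∈ A, ω ∈ lastVisit A x y := by
  have hlim := (mul_right_injective x).tendsto_cofinite.comp htr
  rw [← Nat.cofinite_eq_atTop] at hlim
  have hfin : {n | x * walkPos n ω ∈ A}.Finite := by
    have h := hlim hA.compl_mem_cofinite
    rwa [mem_map, mem_cofinite, preimage_compl, compl_compl] at h
  obtain ⟨n, hn, hmax⟩ := hfin.exists_maximal hω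
  exact ⟨_, hn, n, rfl, fun m hm hmA => hm.not_ge (hmax hmA hm.le)⟩

end FirstHit

section WalkMeasure

variable {μ : G → ℝ}

lemma hitProb_nonneg (hμ : ∀ g, 0 ≤ μ g) (x y : G) : 0 ≤ hitProb μ x y :=
  tsum_nonneg fun _ => prod_map_nonneg hμ _

lemma hitProb_self (μ : G → ℝ) (x : G) : hitProb μ x x = 1 := by
  let nil : {l : List G // IsFirstHitPath x x l} := ⟨[], isFirstHitPath_self_iff.2 rfl⟩
  rw [hitProb, tsum_eq_single nil fun l hl =>
    (hl (Subtype.ext (isFirstHitPath_self_iff.1 l.2))).elim]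
  simp [nil]

-- `Real.log 0 = 0`, so that a vanishing hitting probability would make `greenDist μ` degenerate.
lemma hitProb_pos (hμ : ∀ g, 0 ≤ μ g) (hd : IsMetricFun (greenDist μ)) (x y : G) :
    0 < hitProb μ x y := by
  refine (hitProb_nonneg hμ x y).lt_of_ne' fun h => ?_
  rcases eq_or_ne x y with rfl | hxy
  · simp [hitProb_self] at h
  · simpa [greenDist, h] using hd.pos x y hxy

lemma hitProb_eq_exp_neg_greenDist (hμ : ∀ g, 0 ≤ μ g) (hd : IsMetricFun (greenDist μ))
    (x y : G) : hitProb μ x y = Real.exp (-greenDist μ x y) := by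
  rw [greenDist, neg_neg, Real.exp_log (hitProb_pos hμ hd x y)]

lemma leftInvariant_greenDist (μ : G → ℝ) : LeftInvariant (greenDist μ) := by
  intro g x y
  have h : IsFirstHitPath (g * x) (g * y) = IsFirstHitPath x y := by
    funext l
    simp [isFirstHitPath_iff, mul_assoc]
  rw [greenDist, greenDist, hitProb, hitProb, h]

variable [Countable G] [MeasurableSpace G] [MeasurableSingletonClass G] {P : Measure (ℕ → G)}

lemma measurable_walkPos (n : ℕ) : Measurable (walkPos (G := G) n) := by
  induction n with
  | zero => exact measurable_const
  | succ n ih =>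
    have hsucc : walkPos (G := G) (n + 1) = fun ω => walkPos n ω * ω n := by
      funext ω
      simp [walkPos, List.range_succ]
    rw [hsucc]
    exact ih.mul (measurable_pi_apply n)

lemma measurableSet_walkPos_mem (x : G) (n : ℕ) (A : Set G) :
    MeasurableSet {ω : ℕ → G | x * walkPos n ω ∈ A} :=
  measurable_walkPos n (.of_discrete (s := {g | x * g ∈ A}))

lemma measurableSet_visitEvent (x : G) (A : Set G) : MeasurableSet (visitEvent x A) := by
  rw [visitEvent, ofPred_exists]
  exact .iUnion fun n => measurableSet_walkPos_mem x n A

lemma measurableSet_lastVisit (A : Set G) (x y : G) : MeasurableSet (lastVisit A x y) := by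
  simp only [lastVisit, ofPred_exists, ofPred_and, ofPred_forall]
  exact .iUnion fun n => (measurableSet_walkPos_mem x n {y}).inter
    (.iInter fun m => .iInter fun _ => (measurableSet_walkPos_mem x m A).compl)

lemma IsWalkMeasure.tsum_ofReal_eq_ofReal_hitProb (hP : IsWalkMeasure μ P) (hμ : ∀ g, 0 ≤ μ g)
    (x y : G) :
    ∑' l : {l : List G // IsFirstHitPath x y l}, ENNReal.ofReal (l.1.map μ).prod =
      ENNReal.ofReal (hitProb μ x y) := by
  have := hP.1
  refine (ENNReal.ofReal_tsum_of_nonneg (fun l => prod_map_nonneg hμ _) ?_).symm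
  have hsum : ∑' l : {l : List G // IsFirstHitPath x y l}, P (pathCylinder l.1) ≠ ∞ := by
    rw [← measure_iUnion (pairwise_disjoint_isFirstHitPath x y)
      fun l => measurableSet_pathCylinder l.1]
    exact measure_ne_top P _
  refine (ENNReal.summable_toReal hsum).congr fun l => ?_
  rw [hP.measure_pathCylinder hμ, ENNReal.toReal_ofReal (prod_map_nonneg hμ l.1)]

theorem IsWalkMeasure.measure_hitThen (hP : IsWalkMeasure μ P) (hμ : ∀ g, 0 ≤ μ g) (x y : G)
    {E : Set (ℕ → G)} (hE : MeasurableSet E) :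
    P (hitThen x y E) = ENNReal.ofReal (hitProb μ x y) * P E := by
  rw [hitThen, measure_iUnion, ← hP.tsum_ofReal_eq_ofReal_hitProb hμ, ← ENNReal.tsum_mul_right]
  · simp only [hP.measure_pathCylinder_inter_shift hμ _ hE, hP.measure_pathCylinder hμ]
  · exact fun l l' h => (pairwise_disjoint_isFirstHitPath x y h).mono inter_subset_left
      inter_subset_left
  · exact fun l => (measurableSet_pathCylinder l.1).inter (measurable_shift _ hE)

lemma IsWalkMeasure.measure_lastVisit (hP : IsWalkMeasure μ P) (hμ : ∀ g, 0 ≤ μ g) (A : Set G)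
    (x y : G) :
    P (lastVisit A x y) = ENNReal.ofReal (hitProb μ x y) * P (lastVisit A y y) := by
  rw [lastVisit_eq_hitThen, hP.measure_hitThen hμ x y (measurableSet_lastVisit A y y)]

/-- Almost surely, the walk leaves every finite set. -/
def IsTransient (P : Measure (ℕ → G)) : Prop :=
  ∀ᵐ ω ∂P, Tendsto (fun n => walkPos n ω) atTop cofinite

-- Decompose according to the last visit to `A`; the law of the walk after it does not depend on
-- the starting point.
lemma IsWalkMeasure.measure_visitEvent_finset_le (hP : IsWalkMeasure μ P) (hμ : ∀ g, 0 ≤ μ g)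
    (htr : IsTransient P) {w x : G} {K : ℝ} (A : Finset G)
    (hK : ∀ y ∈ A, hitProb μ w y ≤ K * hitProb μ x y) :
    P (visitEvent w A) ≤ ENNReal.ofReal K := by
  have := hP.1
  calc P (visitEvent w A) ≤ P (⋃ y ∈ A, lastVisit A w y) := by
        refine measure_mono_ae ?_
        filter_upwards [htr] with ω hω hvisit
        obtain ⟨y, hy, hlast⟩ := exists_mem_lastVisit A.finite_toSet hω hvisit
        exact mem_biUnion hy hlast
    _ ≤ ∑ y ∈ A, P (lastVisit A w y) := measure_biUnion_finset_le _ _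
    _ ≤ ∑ y ∈ A, ENNReal.ofReal K * P (lastVisit A x y) := by
        refine Finset.sum_le_sum fun y hy => ?_
        rw [hP.measure_lastVisit hμ A w, hP.measure_lastVisit hμ A x, ← mul_assoc,
          ← ENNReal.ofReal_mul' (hitProb_nonneg hμ x y)]
        gcongr
        exact hK y hy
    _ = ENNReal.ofReal K * P (⋃ y ∈ A, lastVisit A x y) := by
        rw [← Finset.mul_sum, measure_biUnion_finset (pairwiseDisjoint_lastVisit _ x)
          fun y _ => measurableSet_lastVisit _ x y]
    _ ≤ ENNReal.ofReal K := mul_le_of_le_one_right' prob_le_one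

theorem IsWalkMeasure.measure_visitEvent_le (hP : IsWalkMeasure μ P) (hμ : ∀ g, 0 ≤ μ g)
    (htr : IsTransient P) {w x : G} {K : ℝ} {A : Set G}
    (hK : ∀ y ∈ A, hitProb μ w y ≤ K * hitProb μ x y) :
    P (visitEvent w A) ≤ ENNReal.ofReal K := by
  let F (A' : Finset A) : Set (ℕ → G) := visitEvent w (A'.map (.subtype _))
  have hA : visitEvent w A = ⋃ A', F A' := by
    rw [← visitEvent_iUnion]
    congr 1
    ext y
    simp only [mem_iUnion, Finset.mem_coe, Finset.mem_map]
    exact ⟨fun hy => ⟨{⟨y, hy⟩}, ⟨y, hy⟩, by simp⟩, by rintro ⟨-, y, -, rfl⟩; exact y.2⟩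
  have hF : Monotone F := fun A₁ A₂ h ω ⟨n, hn⟩ => ⟨n, Finset.map_subset_map.2 h hn⟩
  rw [hA, hF.directed_le.measure_iUnion]
  refine iSup_le fun A' => hP.measure_visitEvent_finset_le hμ htr (x := x) _ fun y hy => ?_
  obtain ⟨y, -, rfl⟩ := Finset.mem_map.1 hy
  exact hK y y.2

end WalkMeasure

section Boundary

variable {d : G → G → ℝ} {B : Type*} {bd : BoundaryData G d B} {u v : ℕ → G} {a b : B}

lemma BoundaryData.tendsto_cofinite (hd : IsMetricFun d) (h : bd.conv u b) :
    Tendsto u atTop cofinite := by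
  have hlim := (bd.conv_tendstoInfinity u b h).comp tendsto_atTop_diagonal
  refine le_cofinite_iff_eventually_ne.2 fun g => eventually_map.2 ?_
  filter_upwards [hlim.eventually_gt_atTop (d 1 g)] with n hn hng
  exact (hn.trans_le (hd.gromov_le_dist 1 _ _)).ne (by rw [hng])

lemma BoundaryData.exists_forall_le_gromov (h : bd.conv u b) (T : ℝ) :
    ∃ N, ∀ n ≥ N, T ≤ gromov d 1 (u N) (u n) := by
  obtain ⟨⟨m, n⟩, hmn⟩ :=
    eventually_atTop.1 ((bd.conv_tendstoInfinity u b h).eventually_ge_atTop T)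
  exact ⟨max m n, fun k hk => hmn (max m n, k) ⟨le_max_left m n, (le_max_right m n).trans hk⟩⟩

variable [MetricSpace B] {ε C R : ℝ}

lemma IsVisualMetric.eventually_le_gromov (hv : IsVisualMetric d bd ε C) (hd : IsMetricFun d)
    (hu : bd.conv u a) (hv' : bd.conv v b) (hab : C * dist a b < Real.exp (-ε * R)) :
    ∀ᶠ n in atTop, R ≤ gromov d 1 (u n) (v n) := by
  obtain ⟨hε, -, hvis⟩ := hv
  rcases eq_or_ne a b with rfl | hne
  · exact ((bd.conv_iff u v a hu).1 hv').eventually_ge_atTop R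
  · have hR : R < seqGromov d u v := by
      have h := Real.exp_lt_exp.1 ((hvis u v a b hu hv' hne).2.trans_lt hab)
      rwa [neg_mul, neg_mul, neg_lt_neg_iff, mul_lt_mul_iff_right₀ hε] at h
    filter_upwards [eventually_lt_of_lt_liminf hR
      (isBoundedUnder_of ⟨0, fun n => hd.gromov_nonneg 1 _ _⟩)] with n hn using hn.le

lemma IsVisualMetric.dist_le (hv : IsVisualMetric d bd ε C) (hu : bd.conv u a)
    (hv' : bd.conv v b) (hR : ∀ᶠ n in atTop, R ≤ gromov d 1 (u n) (v n)) :
    dist a b ≤ C * Real.exp (-ε * R) := by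
  obtain ⟨hε, hC, hvis⟩ := hv
  rcases eq_or_ne a b with rfl | hne
  · rw [dist_self]
    positivity
  · have hbdd : ∃ M, ∃ᶠ n in atTop, gromov d 1 (u n) (v n) ≤ M := by
      by_contra! h
      refine hne (bd.conv_unique v a b ((bd.conv_iff u v a hu).2 (tendsto_atTop.2 fun M => ?_)) hv')
      exact (h M).mono fun _ => le_of_lt
    obtain ⟨M, hM⟩ := hbdd
    have hliminf : R ≤ seqGromov d u v :=
      le_liminf_of_le (IsCoboundedUnder.of_frequently_le hM) hR
    refine (hvis u v a b hu hv' hne).1.trans ?_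
    rw [neg_mul, neg_mul]
    gcongr

lemma IsVisualMetric.diam_univ_le (hv : IsVisualMetric d bd ε C) (hd : IsMetricFun d) :
    diam (univ : Set B) ≤ C := by
  refine diam_le_of_forall_dist_le hv.2.1.le fun a _ b _ => ?_
  obtain ⟨u, hu⟩ := bd.conv_surj a
  obtain ⟨v, hv'⟩ := bd.conv_surj b
  simpa using hv.dist_le hu hv' (R := 0) (.of_forall fun n => hd.gromov_nonneg 1 _ _)

end Boundary

section Shadow

variable {X : Type*} {d : X → X → ℝ} {δ c D : ℝ} {w p x y : X}

/-- The shadow seen from `w` of the point at height `D` on a geodesic from `w` to `p`, described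
by Gromov products so that the point itself need not exist. -/
def shadow (d : X → X → ℝ) (w p : X) (D : ℝ) : Set X := {y | D ≤ gromov d w y p}

lemma IsHyperbolicWith.dist_le_of_mem_shadow (hh : IsHyperbolicWith d δ) (hd : IsMetricFun d)
    (hc : 0 ≤ c) (hx : segDist d w p D x ≤ c) (hy : y ∈ shadow d w p D) :
    d x y ≤ d w y - D + (3 * c + 2 * δ) := by
  have hpx := hd.le_gromov_of_segDist_le hx
  have hpy : D ≤ gromov d w y p := hy
  rw [hd.gromov_comm] at hpx hpy
  have hxy := hh.sub_le_gromov hpx (sub_le_self D hc |>.trans hpy)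
  have hxw := (max_le_iff.1 hx).1
  unfold gromov at hxy
  rw [hd.symm y w] at hxy
  linarith

variable {d : G → G → ℝ} {x z : G}

lemma LeftInvariant.gromov_mul_left (h : LeftInvariant d) (g w x y : G) :
    gromov d (g * w) (g * x) (g * y) = gromov d w x y := by
  simp only [gromov, h g]

lemma LeftInvariant.sub_lt_gromov_mul (h : LeftInvariant d) (hd : IsMetricFun d)
    (hz : z ∉ shadow d 1 x⁻¹ D) : d 1 x - D < gromov d 1 x (x * z) := by
  have hzx : gromov d 1 z x⁻¹ < D := not_le.1 hz
  rw [hd.gromov_comm, ← h.gromov_mul_left x, mul_one, mul_inv_cancel] at hzx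
  linarith [hd.gromov_add_gromov 1 x (x * z)]

-- Translation by `x⁻¹` moves the starting point `1` to `x⁻¹`: once at `x`, a walk that avoids the
-- shadow of `x⁻¹` does not turn back.
lemma IsVisualMetric.dist_le_of_mem_hitThen {B : Type*} [MetricSpace B] {bd : BoundaryData G d B}
    {ε C T : ℝ} {u : ℕ → G} {N : ℕ} {ω : ℕ → G} {a b : B} (hv : IsVisualMetric d bd ε C)
    (hd : IsMetricFun d) (hinv : LeftInvariant d) (hh : IsHyperbolicWith d δ) (hD : 0 ≤ D)
    (hu : bd.conv u a) (hN : ∀ n ≥ N, T ≤ gromov d 1 (u N) (u n))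
    (hx : segDist d 1 (u N) T x ≤ c) (hω : ω ∈ hitThen 1 x (visitEvent 1 (shadow d 1 x⁻¹ D))ᶜ)
    (hb : bd.conv (fun n => walkPos n ω) b) :
    dist a b ≤ C * Real.exp (-ε * (T - (c + D) - δ - δ)) := by
  obtain ⟨l, hl, hωl, havoid⟩ := mem_hitThen.1 hω
  have hlx : walkPos l.length ω = x := by rw [← hl.walkPos_length hωl, one_mul]
  refine hv.dist_le hu hb ?_
  filter_upwards [eventually_ge_atTop N, eventually_ge_atTop l.length] with n hn hln
  obtain ⟨m, rfl⟩ := Nat.exists_eq_add_of_le hln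
  rw [walkPos_add, hlx]
  have hxz := hinv.sub_lt_gromov_mul hd fun hz => havoid ⟨m, by rwa [one_mul]⟩
  have hδ := hh.nonneg
  have hx1 := (max_le_iff.1 hx).1
  have h1x := hd.le_dist_of_segDist_le hx
  rw [hd.symm] at hx1
  have hxu := hd.le_gromov_of_segDist_le hx
  have huz := hh.sub_le_gromov (r := T - (c + D)) (by linarith)
    (show _ ≤ gromov d 1 x (x * walkPos m (shift l.length ω)) by linarith)
  exact hh.sub_le_gromov (by linarith [hN _ hn]) huz

end Shadow

lemma exists_exp_neg_mul_eq {ε s : ℝ} (hε : ε ≠ 0) (hs : 0 < s) :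
    ∃ R, Real.exp (-ε * R) = s ∧ Real.exp (-R) = s ^ (1 / ε) := by
  refine ⟨-Real.log s / ε, ?_, ?_⟩
  · rw [neg_mul_comm, neg_div, neg_neg, mul_div_cancel₀ _ hε, Real.exp_log hs]
  · rw [neg_div, neg_neg, Real.rpow_def_of_pos hs, mul_one_div]

section HarmonicMeasure

variable [Countable G] [MeasurableSpace G] [MeasurableSingletonClass G] {μ : G → ℝ}
  {P : Measure (ℕ → G)} {δ c : ℝ}

theorem IsWalkMeasure.measure_visitEvent_shadow_le (hP : IsWalkMeasure μ P) (hμ : ∀ g, 0 ≤ μ g)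
    (htr : IsTransient P) (hd : IsMetricFun (greenDist μ))
    (hh : IsHyperbolicWith (greenDist μ) δ) (hgeod : RoughlyGeodesic (greenDist μ) c)
    (w p : G) (D : ℝ) :
    P (visitEvent w (shadow (greenDist μ) w p D)) ≤
      ENNReal.ofReal (Real.exp (3 * c + 2 * δ - D)) := by
  have := hP.1
  have hδ := hh.nonneg
  have hc := hgeod.nonneg hd
  rcases lt_or_ge D 0 with hD | hD
  · exact prob_le_one.trans (ENNReal.one_le_ofReal.2 (Real.one_le_exp (by linarith)))
  rcases lt_or_ge (greenDist μ w p) D with hpD | hDp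
  · have hempty : shadow (greenDist μ) w p D = ∅ :=
      eq_empty_of_forall_notMem fun y hy => ((hd.gromov_le_dist w y p).trans_lt hpD).not_ge hy
    simp [hempty, visitEvent]
  · obtain ⟨x, hx⟩ := hgeod w p D ⟨hD, hDp⟩
    refine hP.measure_visitEvent_le hμ htr (x := x) fun y hy => ?_
    rw [hitProb_eq_exp_neg_greenDist hμ hd, hitProb_eq_exp_neg_greenDist hμ hd, ← Real.exp_add]
    exact Real.exp_le_exp.2 (by linarith [hh.dist_le_of_mem_shadow hd hc hx hy])

lemma IsWalkMeasure.le_measure_hitThen_avoid_shadow (hP : IsWalkMeasure μ P)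
    (hμ : ∀ g, 0 ≤ μ g) (htr : IsTransient P) (hd : IsMetricFun (greenDist μ))
    (hh : IsHyperbolicWith (greenDist μ) δ) (hgeod : RoughlyGeodesic (greenDist μ) c)
    (w x v p : G) :
    ENNReal.ofReal (Real.exp (-greenDist μ w x) / 2) ≤
      P (hitThen w x (visitEvent v (shadow (greenDist μ) v p (3 * c + 2 * δ + 1)))ᶜ) := by
  have := hP.1
  have hmeas := measurableSet_visitEvent v (shadow (greenDist μ) v p (3 * c + 2 * δ + 1))
  have hhalf : ENNReal.ofReal (1 / 2) ≤
      P (visitEvent v (shadow (greenDist μ) v p (3 * c + 2 * δ + 1)))ᶜ := by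
    have hexp : Real.exp (-1) ≤ 1 / 2 := Real.exp_neg_one_lt_half.le
    rw [prob_compl_eq_one_sub hmeas, show (1 / 2 : ℝ) = 1 - 1 / 2 by norm_num,
      ENNReal.ofReal_sub _ (by norm_num), ENNReal.ofReal_one]
    gcongr
    refine (hP.measure_visitEvent_shadow_le hμ htr hd hh hgeod v p _).trans ?_
    rw [sub_add_cancel_left]
    gcongr
  rw [hP.measure_hitThen hμ w x hmeas.compl, hitProb_eq_exp_neg_greenDist hμ hd,
    div_eq_mul_one_div, ENNReal.ofReal_mul (Real.exp_nonneg _)]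
  gcongr

variable {B : Type*} [MetricSpace B] {bd : BoundaryData G (greenDist μ) B} {ε C r : ℝ}
  {Z : (ℕ → G) → B}

theorem IsVisualMetric.measure_preimage_ball_le (hv : IsVisualMetric (greenDist μ) bd ε C)
    (hP : IsWalkMeasure μ P) (hμ : ∀ g, 0 ≤ μ g)
    (hZ : ∀ᵐ ω ∂P, bd.conv (fun n => walkPos n ω) (Z ω)) (hd : IsMetricFun (greenDist μ))
    (hh : IsHyperbolicWith (greenDist μ) δ) (hgeod : RoughlyGeodesic (greenDist μ) c) (a : B)
    (hr : 0 < r) :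
    P (Z ⁻¹' ball a r) ≤
      ENNReal.ofReal (Real.exp (3 * c + 3 * δ) * C ^ (1 / ε) * r ^ (1 / ε)) := by
  obtain ⟨hε, hC, -⟩ := id hv
  have htr : IsTransient P := hZ.mono fun ω hω => BoundaryData.tendsto_cofinite hd hω
  obtain ⟨u, hu⟩ := bd.conv_surj a
  obtain ⟨R, hR, hR'⟩ := exists_exp_neg_mul_eq hε.ne' (mul_pos hC hr)
  obtain ⟨N, hN⟩ := BoundaryData.exists_forall_le_gromov hu R
  calc P (Z ⁻¹' ball a r)
      ≤ P (visitEvent 1 (shadow (greenDist μ) 1 (u N) (R - δ))) := by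
        refine measure_mono_ae (hZ.mono fun ω hω hball => ?_)
        have hdist : C * dist a (Z ω) < Real.exp (-ε * R) := by
          rw [hR, dist_comm]
          exact mul_lt_mul_of_pos_left hball hC
        obtain ⟨n, hn, hNn⟩ :=
          ((hv.eventually_le_gromov hd hu hω hdist).and (eventually_ge_atTop N)).exists
        refine ⟨n, ?_⟩
        rw [one_mul]
        exact hh.sub_le_gromov hn ((hN n hNn).trans_eq (hd.gromov_comm _ _ _))
    _ ≤ ENNReal.ofReal (Real.exp (3 * c + 2 * δ - (R - δ))) :=
        hP.measure_visitEvent_shadow_le hμ htr hd hh hgeod 1 (u N) (R - δ)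
    _ = ENNReal.ofReal (Real.exp (3 * c + 3 * δ) * C ^ (1 / ε) * r ^ (1 / ε)) := by
        rw [mul_assoc, ← Real.mul_rpow hC.le hr.le, ← hR', ← Real.exp_add]
        ring_nf

theorem IsVisualMetric.le_measure_preimage_closedBall (hv : IsVisualMetric (greenDist μ) bd ε C)
    (hP : IsWalkMeasure μ P) (hμ : ∀ g, 0 ≤ μ g)
    (hZ : ∀ᵐ ω ∂P, bd.conv (fun n => walkPos n ω) (Z ω)) (hd : IsMetricFun (greenDist μ))
    (hh : IsHyperbolicWith (greenDist μ) δ) (hgeod : RoughlyGeodesic (greenDist μ) c) (a : B)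
    {R : ℝ} (hR : 0 ≤ R) :
    ENNReal.ofReal (Real.exp (-(5 * c + 4 * δ + 1 + R)) / 2) ≤
      P (Z ⁻¹' closedBall a (C * Real.exp (-ε * R))) := by
  have hδ := hh.nonneg
  have hc := hgeod.nonneg hd
  have htr : IsTransient P := hZ.mono fun ω hω => BoundaryData.tendsto_cofinite hd hω
  have hinv := leftInvariant_greenDist μ
  obtain ⟨u, hu⟩ := bd.conv_surj a
  let D := 3 * c + 2 * δ + 1
  let T := R + (c + D) + δ + δ
  have hD : 0 ≤ D := by positivity
  obtain ⟨N, hN⟩ := BoundaryData.exists_forall_le_gromov hu T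
  obtain ⟨x, hx⟩ := hgeod 1 (u N) T
    ⟨by positivity, (hN N le_rfl).trans (hd.gromov_le_dist 1 _ _)⟩
  have hx1 : greenDist μ 1 x ≤ 5 * c + 4 * δ + 1 + R := by
    rw [hd.symm]
    linarith [(max_le_iff.1 hx).1]
  calc ENNReal.ofReal (Real.exp (-(5 * c + 4 * δ + 1 + R)) / 2)
      ≤ ENNReal.ofReal (Real.exp (-greenDist μ 1 x) / 2) := by gcongr
    _ ≤ P (hitThen 1 x (visitEvent 1 (shadow (greenDist μ) 1 x⁻¹ D))ᶜ) :=
        hP.le_measure_hitThen_avoid_shadow hμ htr hd hh hgeod 1 x 1 x⁻¹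
    _ ≤ P (Z ⁻¹' closedBall a (C * Real.exp (-ε * R))) := by
        refine measure_mono_ae (hZ.mono fun ω hω hhit => ?_)
        have hdist := hv.dist_le_of_mem_hitThen hd hinv hh hD hu hN hx hhit hω
        rw [show T - (c + D) - δ - δ = R by simp only [T]; ring] at hdist
        exact mem_closedBall'.2 hdist

theorem IsVisualMetric.le_measure_preimage_ball (hv : IsVisualMetric (greenDist μ) bd ε C)
    (hP : IsWalkMeasure μ P) (hμ : ∀ g, 0 ≤ μ g)
    (hZ : ∀ᵐ ω ∂P, bd.conv (fun n => walkPos n ω) (Z ω)) (hd : IsMetricFun (greenDist μ))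
    (hh : IsHyperbolicWith (greenDist μ) δ) (hgeod : RoughlyGeodesic (greenDist μ) c) (a : B)
    (hr : 0 < r) (hrC : r ≤ C) :
    ENNReal.ofReal (Real.exp (-(5 * c + 4 * δ + 1)) / 2 * (2 * C)⁻¹ ^ (1 / ε) * r ^ (1 / ε)) ≤
      P (Z ⁻¹' ball a r) := by
  obtain ⟨hε, hC, -⟩ := id hv
  obtain ⟨R, hR, hR'⟩ := exists_exp_neg_mul_eq hε.ne' (show 0 < (2 * C)⁻¹ * r by positivity)
  have hR₀ : 0 ≤ R := by
    have hle : (2 * C)⁻¹ * r ≤ 1 := by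
      rw [inv_mul_le_one₀ (by positivity)]
      linarith
    rwa [← hR, Real.exp_le_one_iff, neg_mul, neg_nonpos, mul_nonneg_iff_of_pos_left hε] at hle
  have hradius : C * Real.exp (-ε * R) < r := by
    rw [hR]
    field_simp
    norm_num
  calc ENNReal.ofReal (Real.exp (-(5 * c + 4 * δ + 1)) / 2 * (2 * C)⁻¹ ^ (1 / ε) * r ^ (1 / ε))
      = ENNReal.ofReal (Real.exp (-(5 * c + 4 * δ + 1 + R)) / 2) := by
        rw [mul_assoc, ← Real.mul_rpow (by positivity) hr.le, ← hR', div_mul_eq_mul_div,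
          ← Real.exp_add, ← neg_add]
    _ ≤ P (Z ⁻¹' closedBall a (C * Real.exp (-ε * R))) :=
        hv.le_measure_preimage_closedBall hP hμ hZ hd hh hgeod a hR₀
    _ ≤ P (Z ⁻¹' ball a r) := measure_mono (preimage_mono (closedBall_subset_ball hradius))

end HarmonicMeasure

lemma AhlforsRegularOfDim.of_le_of_ge {B : Type*} [MetricSpace B] [MeasurableSpace B]
    {ν : Measure B} {α k K : ℝ} (hk : 0 < k)
    (hlower : ∀ b r, 0 < r → r ≤ diam (univ : Set B) →
      ENNReal.ofReal (k * r ^ α) ≤ ν (ball b r))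
    (hupper : ∀ b r, 0 < r → ν (ball b r) ≤ ENNReal.ofReal (K * r ^ α)) :
    AhlforsRegularOfDim ν α := by
  have hpos : 0 < max k⁻¹ K := lt_max_of_lt_left (inv_pos.2 hk)
  refine ⟨max k⁻¹ K, hpos, fun b r hr hrd => ⟨?_, ?_⟩⟩
  · refine le_trans ?_ (hlower b r hr hrd)
    gcongr
    exact inv_le_of_inv_le₀ hk (le_max_left _ _)
  · refine (hupper b r hr).trans ?_
    gcongr
    exact le_max_right _ _

theorem harmonic_measure_ahlfors_regular_general [Countable G] [MeasurableSpace G]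
    [MeasurableSingletonClass G] {μ : G → ℝ} (hμ : ∀ g, 0 ≤ μ g) (hd : IsMetricFun (greenDist μ))
    (hh : IsHyperbolic (greenDist μ)) {c : ℝ} (hgeod : RoughlyGeodesic (greenDist μ) c)
    {B : Type*} [MetricSpace B] [MeasurableSpace B] [OpensMeasurableSpace B]
    {bd : BoundaryData G (greenDist μ) B} {ε C : ℝ} (hv : IsVisualMetric (greenDist μ) bd ε C)
    {P : Measure (ℕ → G)} {ν : Measure B} (hν : IsHarmonicMeasure (greenDist μ) bd μ P ν) :
    AhlforsRegularOfDim ν (1 / ε) := by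
  obtain ⟨δ, -, hh⟩ := hh
  obtain ⟨hP, Z, hZm, hZ, rfl⟩ := hν
  have hC := hv.2.1
  refine .of_le_of_ge (k := Real.exp (-(5 * c + 4 * δ + 1)) / 2 * (2 * C)⁻¹ ^ (1 / ε))
    (K := Real.exp (3 * c + 3 * δ) * C ^ (1 / ε)) (by positivity)
    (fun a r hr hrd => ?_) fun a r hr => ?_
  · rw [Measure.map_apply hZm measurableSet_ball]
    exact hv.le_measure_preimage_ball hP hμ hZ hd hh hgeod a hr
      (hrd.trans (hv.diam_univ_le hd))
  · rw [Measure.map_apply hZm measurableSet_ball]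
    exact hv.measure_preimage_ball_le hP hμ hZ hd hh hgeod a hr

/-- **Theorem 1.1(ii).**  If the Green metric of a symmetric random walk whose support
generates a non-elementary hyperbolic group belongs to `𝒟(Γ)`, then for every small
enough `ε > 0` the harmonic measure is Ahlfors regular of dimension `1/ε` for any visual
metric of parameter `ε` induced by `d_G` on the boundary. -/
theorem harmonic_measure_ahlfors_regular
    {G : Type*} [Group G] [Countable G] [MeasurableSpace G] [MeasurableSingletonClass G]
    (hG : NonElemHyperbolic G)
    (μ : G → ℝ) (hprob : IsProbDensity μ) (hsymm : IsSymmetric μ) (hgen : GeneratesSupp μ)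
    (hD : MemD (greenDist μ)) :
    ∃ ε₀ : ℝ, 0 < ε₀ ∧
      ∀ ε : ℝ, 0 < ε → ε ≤ ε₀ →
        ∀ (B : Type) [MetricSpace B] [MeasurableSpace B] [BorelSpace B],
          ∀ (bd : BoundaryData G (greenDist μ) B) (C : ℝ),
            IsVisualMetric (greenDist μ) bd ε C →
            ∀ (P : Measure (ℕ → G)) (ν : Measure B),
              IsHarmonicMeasure (greenDist μ) bd μ P ν →
              AhlforsRegularOfDim ν (1 / ε) := by
  obtain ⟨c, hgeod⟩ := hD.exists_roughlyGeodesic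
  exact ⟨1, one_pos, fun ε _ _ B _ _ _ bd C hv P ν hν =>
    harmonic_measure_ahlfors_regular_general hprob.1 hD.1 hD.2.2.1 hgeod hv hν⟩

end GHM
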